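/- For all LBV structures P and Q and every context C{ }, there exists a derivation using only the switch rule s with premise C[P,Q] and conclusion [C{P}, Q]. -/

import Mathlib

/-!
The structure `Q` is moved out of the context one layer at a time, by induction on `C`.  Since
derivations compose (`Deriv.trans`) and can be carried out inside any context (`Deriv.fill`),
the induction hypothesis turns `C[P,Q]` into `[C{P},Q]` inside the outermost layer.  If that layer
is a par, associativity and commutativity suffice; if it is a copar with `R`, one switch
`(R,[C{P},Q]) ⟶ [(R,C{P}),Q]` does it (`Deriv.switch`).
-/

/-!
The deep-inference system LBV (the `BV`-free core system of the calculus of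
structures of Guglielmi).  Structures are built from the unit `◦`, atoms `a`
and negated atoms `ā` by par `[P,Q]` and copar `(P,Q)`, and are identified
modulo the congruence generated by associativity, commutativity and the
unit laws `[P,◦]=P`, `(P,◦)=P`.  The rules `ai↓`, `s` (and the atomic cut
`ai↑`) apply inside an arbitrary one-hole context and modulo the
equivalence.
-/

namespace LBV

/-- Structures: the unit `◦`, atoms, negated atoms, par `[P,Q]` and
copar `(P,Q)`. -/
inductive St : Type where
  | unit : St
  | pos  : ℕ → St
  | neg  : ℕ → St
  | par  : St → St → St
  | cop  : St → St → St
deriving DecidableEq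

/-- Negation: `¬◦ = ◦`, `¬[P,Q] = (¬P,¬Q)`, `¬(P,Q) = [¬P,¬Q]`, `¬¬P = P`. -/
def St.negS : St → St
  | .unit => .unit
  | .pos a => .neg a
  | .neg a => .pos a
  | .par P Q => .cop P.negS Q.negS
  | .cop P Q => .par P.negS Q.negS

/-- Atoms are the propositional symbols and their negations. -/
def St.isAtom : St → Prop
  | .pos _ => True
  | .neg _ => True
  | _ => False

/-- Syntactic equivalence of structures: the smallest congruence generated
by associativity and commutativity of par and copar and the unit laws
`[P,◦]=P` and `(P,◦)=P`. -/
inductive Equiv : St → St → Prop where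
  | refl (P : St) : Equiv P P
  | symm {P Q : St} : Equiv P Q → Equiv Q P
  | trans {P Q R : St} : Equiv P Q → Equiv Q R → Equiv P R
  | parComm (P Q : St) : Equiv (.par P Q) (.par Q P)
  | copComm (P Q : St) : Equiv (.cop P Q) (.cop Q P)
  | parAssoc (P Q R : St) : Equiv (.par (.par P Q) R) (.par P (.par Q R))
  | copAssoc (P Q R : St) : Equiv (.cop (.cop P Q) R) (.cop P (.cop Q R))
  | parUnit (P : St) : Equiv (.par P .unit) P
  | copUnit (P : St) : Equiv (.cop P .unit) P
  | parCongr {P P' Q Q' : St} :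
      Equiv P P' → Equiv Q Q' → Equiv (.par P Q) (.par P' Q')
  | copCongr {P P' Q Q' : St} :
      Equiv P P' → Equiv Q Q' → Equiv (.cop P Q) (.cop P' Q')

/-- One-hole contexts. -/
inductive Ctx : Type where
  | hole : Ctx
  | parL : Ctx → St → Ctx
  | parR : St → Ctx → Ctx
  | copL : Ctx → St → Ctx
  | copR : St → Ctx → Ctx

/-- Plugging a structure into the hole of a context. -/
def Ctx.fill : Ctx → St → St
  | .hole, P => P
  | .parL C Q, P => .par (C.fill P) Q
  | .parR Q C, P => .par Q (C.fill P)
  | .copL C Q, P => .cop (C.fill P) Q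
  | .copR Q C, P => .cop Q (C.fill P)

/-- Names of the rules: interaction `ai↓`, co-interaction (atomic cut)
`ai↑`, and switch `s`. -/
inductive Rule : Type where
  | aiDown | aiUp | s
deriving DecidableEq

/-- The rules read at the root of a structure (premise on the left,
conclusion on the right). -/
inductive RootStep : Rule → St → St → Prop where
  | aiDown (A : St) (h : A.isAtom) : RootStep .aiDown .unit (.par A A.negS)
  | aiUp (A : St) (h : A.isAtom) : RootStep .aiUp (.cop A A.negS) .unit
  | s (P Q R : St) : RootStep .s (.cop P (.par Q R)) (.par (.cop P Q) R)

/-- One inference step using a rule from the set `Rs`, applied inside an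
arbitrary context and modulo the equivalence. -/
def Step (Rs : Set Rule) (P Q : St) : Prop :=
  ∃ r ∈ Rs, ∃ (C : Ctx) (P' Q' : St),
    RootStep r P' Q' ∧ Equiv P (C.fill P') ∧ Equiv (C.fill Q') Q

/-- Derivations over an arbitrary step relation: a finite sequence of rule
instances from the premise to the conclusion (modulo the equivalence). -/
inductive Deriv (Stp : St → St → Prop) : St → St → Prop where
  | eqv {P Q : St} : Equiv P Q → Deriv Stp P Q
  | step {P Q R : St} : Stp P Q → Deriv Stp Q R → Deriv Stp P R

/-- The rules of the system LBV. -/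
def LBVRules : Set Rule := {.aiDown, .s}

/-- Derivations in LBV. -/
def DerivLBV (P Q : St) : Prop := Deriv (Step LBVRules) P Q

/-- A proof of `Q` in LBV is a derivation from the unit `◦` to `Q`. -/
def ProofLBV (Q : St) : Prop := DerivLBV .unit Q

end LBV

namespace LBV

/-- `C.comp D` is the context `C{D{ }}`. -/
def Ctx.comp : Ctx → Ctx → Ctx
  | .hole, D => D
  | .parL C Q, D => .parL (C.comp D) Q
  | .parR Q C, D => .parR Q (C.comp D)
  | .copL C Q, D => .copL (C.comp D) Q
  | .copR Q C, D => .copR Q (C.comp D)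

theorem Ctx.fill_comp (C D : Ctx) (P : St) : (C.comp D).fill P = C.fill (D.fill P) := by
  induction C <;> simp [Ctx.comp, Ctx.fill, *]

theorem Equiv.fill (C : Ctx) {P Q : St} (h : Equiv P Q) : Equiv (C.fill P) (C.fill Q) := by
  induction C with
  | hole => exact h
  | parL C R ih => exact .parCongr ih (.refl _)
  | parR R C ih => exact .parCongr (.refl _) ih
  | copL C R ih => exact .copCongr ih (.refl _)
  | copR R C ih => exact .copCongr (.refl _) ih

theorem Step.fill {Rs : Set Rule} (C : Ctx) {P Q : St} (h : Step Rs P Q) :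
    Step Rs (C.fill P) (C.fill Q) := by
  obtain ⟨r, hr, D, P', Q', hroot, hP, hQ⟩ := h
  refine ⟨r, hr, C.comp D, P', Q', hroot, ?_, ?_⟩
  · rw [Ctx.fill_comp]
    exact hP.fill C
  · rw [Ctx.fill_comp]
    exact hQ.fill C

theorem Deriv.fill {Rs : Set Rule} (C : Ctx) {P Q : St} (h : Deriv (Step Rs) P Q) :
    Deriv (Step Rs) (C.fill P) (C.fill Q) := by
  induction h with
  | eqv h => exact .eqv (h.fill C)
  | step h _ ih => exact .step (h.fill C) ih

/-- An equivalence in front of a derivation is absorbed by its first step, since steps are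
taken modulo the equivalence. -/
theorem Deriv.of_equiv {Rs : Set Rule} {P Q R : St} (h : Equiv P Q)
    (d : Deriv (Step Rs) Q R) : Deriv (Step Rs) P R := by
  cases d with
  | eqv h' => exact .eqv (h.trans h')
  | step hs d =>
    obtain ⟨r, hr, D, P', Q', hroot, hP, hQ⟩ := hs
    exact .step ⟨r, hr, D, P', Q', hroot, h.trans hP, hQ⟩ d

theorem Deriv.trans {Rs : Set Rule} {P Q R : St} (h : Deriv (Step Rs) P Q)
    (d : Deriv (Step Rs) Q R) : Deriv (Step Rs) P R := by
  induction h with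
  | eqv h => exact d.of_equiv h
  | step hs _ ih => exact .step hs (ih d)

/-- A single switch at the root, up to equivalence of the conclusion. -/
theorem Deriv.switch {P Q R T : St} (h : Equiv (.par (.cop P Q) R) T) :
    Deriv (Step {Rule.s}) (.cop P (.par Q R)) T :=
  .step ⟨.s, rfl, .hole, _, _, .s P Q R, .refl _, h⟩ (.eqv (.refl _))

/-- Proposition: context insertion for LBV.
For all structures `P`, `Q` and every context `C{ }`, there is a derivation
using only the switch rule `s` with premise `C[P,Q]` and conclusion
`[C{P}, Q]`. -/
theorem ctx_insertion (P Q : St) (C : Ctx) :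
    Deriv (Step {Rule.s}) (C.fill (.par P Q)) (.par (C.fill P) Q) := by
  induction C with
  | hole => exact .eqv (.refl _)
  | parL C R ih =>
    -- `[[C{P},Q],R] = [[C{P},R],Q]`
    refine (ih.fill (.parL .hole R)).trans (.eqv ?_)
    exact (Equiv.parAssoc _ _ _).trans
      ((Equiv.parCongr (.refl _) (.parComm _ _)).trans (.symm (.parAssoc _ _ _)))
  | parR R C ih =>
    exact (ih.fill (.parR R .hole)).trans (.eqv (.symm (.parAssoc _ _ _)))
  | copL C R ih =>
    exact (ih.fill (.copL .hole R)).trans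
      (.of_equiv (.copComm _ _) (.switch (.parCongr (.copComm _ _) (.refl _))))
  | copR R C ih =>
    exact (ih.fill (.copR R .hole)).trans (.switch (.refl _))

end LBV
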